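/- arXiv:2302.08923 — 2 statements merged into one kernel-verified Lean document; each statement's English description precedes it below -/
import Mathlib

section
/- Let α, λ > 0, Δ > 0, ρ ≥ 0, γ ≥ 0, π ∈ ℝ, and let V > 0, q, m, h, V̂, q̂, m̂, ĥ be real numbers satisfying the coupled system: V̂ = α/(1+V), q̂ = α(ρ + Δ + q − 2m + (π−h)²)/(1+V)², m̂ = α/(1+V), ĥ = α(π−h)/(1+V), V = 1/(λ + V̂), q = V²(q̂ + ρ m̂² + 2π m̂ ĥ + γ ĥ²), m = V(ρ m̂ + π ĥ), h = V(γ ĥ + π m̂). Set η := V·V̂, ε_gen := ρ + Δ + q − 2m + (π−h)², and ε_tr := ε_gen/(1+V)². Then η ∈ (0, min(α,1)) (so α − η² > 0 and 1 + γη > 0), and ε_gen = g(α,Δ,ρ,η)·(1 − π² A(η)) and ε_tr = t(α,Δ,ρ,η)·(1 − π² A(η)), where A(η) := (η−1)²(γη² + 2η − 1)/((Δ + (η−1)²ρ)(1+γη)²), g(α,Δ,ρ,η) := α(Δ + (η−1)²ρ)/(α − η²), and t(α,Δ,ρ,η) := (α−η)²(Δ + (η−1)²ρ)/(α(α − η²)).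 -/
/-!
The hatted overlaps are multiples of `V̂`: `m̂ = V̂`, `ĥ = V̂ (π - h)` and `α q̂ = V̂² ε_gen`. Hence
`V` and `V̂` enter the equations for `q`, `m`, `h` only through `η = V V̂`, and these become linear:
the one for `h` gives `(π - h)(1 + γ η) = π (1 - η)`, and substituting `q` and `m` into `ε_gen`
gives `(α - η²) ε_gen = α (Δ + (1 - η)² ρ - 2 π η (1 - η)(π - h) + (1 + γ η²)(π - h)²)`.
Eliminating `π - h` yields the formula for `ε_gen`. The one for `ε_tr` follows because
`V̂ (1 + V) = α` means `α - η = V̂`, so that `1 / (1 + V) = (α - η) / α`.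
-/

/-- Parameters of ridge regression on two clusters with means `±μ`: sample complexity `α`, ridge
penalty `lam`, label noise variance `Δ`, and the limits `ρ`, `γ`, `π` of `θ₀ᵀθ₀ / d`, `‖μ‖² / d`,
`μᵀθ₀ / d`. -/
structure TwoClusterModel (K : Type*) where
  (α lam Δ ρ γ π : K)

/-- The order parameters of the replica computation, together with their conjugates. -/
structure Overlaps (K : Type*) where
  (V q m h Vhat qhat mhat hhat : K)

section Definitions

variable {K : Type*} [Field K] (M : TwoClusterModel K) (O : Overlaps K)

/-- The variable `η = V V̂` in which the errors have a closed form. -/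
def Overlaps.eta : K := O.V * O.Vhat

/-- The asymptotic generalization error `ε_gen`. -/
def genError : K := M.ρ + M.Δ + O.q - 2 * O.m + (M.π - O.h) ^ 2

/-- The asymptotic training error `ε_tr`. -/
def trainError : K := genError M O / (1 + O.V) ^ 2

/-- The replica saddle-point equations. -/
structure IsSaddlePoint : Prop where
  Vhat_eq : O.Vhat = M.α / (1 + O.V)
  qhat_eq : O.qhat = M.α * genError M O / (1 + O.V) ^ 2
  mhat_eq : O.mhat = M.α / (1 + O.V)
  hhat_eq : O.hhat = M.α * (M.π - O.h) / (1 + O.V)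
  V_eq : O.V = 1 / (M.lam + O.Vhat)
  q_eq : O.q = O.V ^ 2 *
    (O.qhat + M.ρ * O.mhat ^ 2 + 2 * M.π * O.mhat * O.hhat + M.γ * O.hhat ^ 2)
  m_eq : O.m = O.V * (M.ρ * O.mhat + M.π * O.hhat)
  h_eq : O.h = O.V * (M.γ * O.hhat + M.π * O.mhat)

/-- The factor `g` of the generalization error: its value when `π = 0`, that is, when the cluster
means are asymptotically orthogonal to the target. -/
def orthogonalGenError (η : K) : K := M.α * (M.Δ + (η - 1) ^ 2 * M.ρ) / (M.α - η ^ 2)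

/-- The factor `t` of the training error: its value when `π = 0`. -/
def orthogonalTrainError (η : K) : K :=
  (M.α - η) ^ 2 * (M.Δ + (η - 1) ^ 2 * M.ρ) / (M.α * (M.α - η ^ 2))

/-- The coefficient `A` of `π²`: both errors are `1 - π² A` times their value at `π = 0`. -/
def alignmentCoeff (η : K) : K :=
  (η - 1) ^ 2 * (M.γ * η ^ 2 + 2 * η - 1) /
    ((M.Δ + (η - 1) ^ 2 * M.ρ) * (1 + M.γ * η) ^ 2)

end Definitions

namespace IsSaddlePoint

section Field

variable {K : Type*} [Field K] {M : TwoClusterModel K} {O : Overlaps K}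

theorem mhat_eq_Vhat (S : IsSaddlePoint M O) : O.mhat = O.Vhat :=
  S.mhat_eq.trans S.Vhat_eq.symm

theorem hhat_eq_Vhat_mul (S : IsSaddlePoint M O) : O.hhat = O.Vhat * (M.π - O.h) := by
  rw [S.hhat_eq, S.Vhat_eq, div_mul_eq_mul_div]

theorem alpha_mul_qhat (S : IsSaddlePoint M O) :
    M.α * O.qhat = O.Vhat ^ 2 * genError M O := by
  rw [S.qhat_eq, S.Vhat_eq, div_pow]
  ring

theorem pi_sub_h_mul (S : IsSaddlePoint M O) :
    (M.π - O.h) * (1 + M.γ * O.eta) = M.π * (1 - O.eta) := by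
  have h_eq := S.h_eq
  rw [S.hhat_eq_Vhat_mul, S.mhat_eq_Vhat] at h_eq
  rw [Overlaps.eta]
  linear_combination -h_eq

theorem m_eq_eta_mul (S : IsSaddlePoint M O) :
    O.m = O.eta * (M.ρ + M.π * (M.π - O.h)) := by
  rw [S.m_eq, S.mhat_eq_Vhat, S.hhat_eq_Vhat_mul, Overlaps.eta]
  ring

theorem alpha_mul_q (S : IsSaddlePoint M O) :
    M.α * O.q = O.eta ^ 2 * (genError M O +
      M.α * (M.ρ + 2 * M.π * (M.π - O.h) + M.γ * (M.π - O.h) ^ 2)) := by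
  rw [S.q_eq, S.mhat_eq_Vhat, S.hhat_eq_Vhat_mul, Overlaps.eta]
  linear_combination O.V ^ 2 * S.alpha_mul_qhat

theorem genError_mul (S : IsSaddlePoint M O) :
    genError M O * (M.α - O.eta ^ 2) =
      M.α * (M.Δ + (O.eta - 1) ^ 2 * M.ρ - 2 * M.π * O.eta * (1 - O.eta) * (M.π - O.h) +
        (1 + M.γ * O.eta ^ 2) * (M.π - O.h) ^ 2) := by
  have genError_def : genError M O = M.ρ + M.Δ + O.q - 2 * O.m + (M.π - O.h) ^ 2 := rfl
  linear_combination M.α * genError_def + S.alpha_mul_q - 2 * M.α * S.m_eq_eta_mul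

theorem alignment_terms_mul (S : IsSaddlePoint M O) :
    ((1 + M.γ * O.eta ^ 2) * (M.π - O.h) ^ 2 -
        2 * M.π * O.eta * (1 - O.eta) * (M.π - O.h)) * (1 + M.γ * O.eta) ^ 2 =
      -(M.π ^ 2 * ((O.eta - 1) ^ 2 * (M.γ * O.eta ^ 2 + 2 * O.eta - 1))) := by
  linear_combination
    ((1 + M.γ * O.eta ^ 2) * ((M.π - O.h) * (1 + M.γ * O.eta) + M.π * (1 - O.eta)) -
      2 * M.π * O.eta * (1 - O.eta) * (1 + M.γ * O.eta)) * S.pi_sub_h_mul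

theorem genError_eq (S : IsSaddlePoint M O) (hD : M.α - O.eta ^ 2 ≠ 0)
    (hG : 1 + M.γ * O.eta ≠ 0) (hR : M.Δ + (O.eta - 1) ^ 2 * M.ρ ≠ 0) :
    genError M O =
      orthogonalGenError M O.eta * (1 - M.π ^ 2 * alignmentCoeff M O.eta) := by
  have coeff_mul : (M.Δ + (O.eta - 1) ^ 2 * M.ρ) * alignmentCoeff M O.eta =
      (O.eta - 1) ^ 2 * (M.γ * O.eta ^ 2 + 2 * O.eta - 1) / (1 + M.γ * O.eta) ^ 2 := by
    rw [alignmentCoeff, ← mul_div_assoc, mul_div_mul_left _ _ hR]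
  rw [orthogonalGenError, div_mul_eq_mul_div, eq_div_iff hD, S.genError_mul]
  linear_combination M.α * eq_div_of_mul_eq (pow_ne_zero 2 hG) S.alignment_terms_mul +
    M.α * M.π ^ 2 * coeff_mul

theorem Vhat_mul (S : IsSaddlePoint M O) (hV : 1 + O.V ≠ 0) : O.Vhat * (1 + O.V) = M.α := by
  rw [S.Vhat_eq, div_mul_cancel₀ _ hV]

theorem alpha_sub_eta (S : IsSaddlePoint M O) (hV : 1 + O.V ≠ 0) :
    M.α - O.eta = O.Vhat := by
  rw [Overlaps.eta]
  linear_combination -S.Vhat_mul hV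

theorem trainError_eq_mul_genError (S : IsSaddlePoint M O) (hα : M.α ≠ 0)
    (hV : 1 + O.V ≠ 0) :
    trainError M O = ((M.α - O.eta) / M.α) ^ 2 * genError M O := by
  have ratio_eq : (M.α - O.eta) / M.α = (1 + O.V)⁻¹ := by
    rw [S.alpha_sub_eta hV, S.Vhat_eq, div_div_cancel_left' hα]
  rw [ratio_eq, trainError, inv_pow, inv_mul_eq_div]

theorem trainError_eq (S : IsSaddlePoint M O) (hα : M.α ≠ 0) (hV : 1 + O.V ≠ 0)
    (hD : M.α - O.eta ^ 2 ≠ 0) (hG : 1 + M.γ * O.eta ≠ 0)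
    (hR : M.Δ + (O.eta - 1) ^ 2 * M.ρ ≠ 0) :
    trainError M O =
      orthogonalTrainError M O.eta * (1 - M.π ^ 2 * alignmentCoeff M O.eta) := by
  have factor_eq :
      ((M.α - O.eta) / M.α) ^ 2 * orthogonalGenError M O.eta = orthogonalTrainError M O.eta := by
    rw [orthogonalGenError, orthogonalTrainError]
    field_simp
  rw [S.trainError_eq_mul_genError hα hV, S.genError_eq hD hG hR, ← mul_assoc, factor_eq]

end Field

section OrderedField

variable {K : Type*} [Field K] [LinearOrder K] [IsStrictOrderedRing K]
  {M : TwoClusterModel K} {O : Overlaps K}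

theorem Vhat_pos (S : IsSaddlePoint M O) (hα : 0 < M.α) (hV : 0 < O.V) : 0 < O.Vhat := by
  rw [S.Vhat_eq]
  positivity

theorem eta_pos (S : IsSaddlePoint M O) (hα : 0 < M.α) (hV : 0 < O.V) : 0 < O.eta :=
  mul_pos hV (S.Vhat_pos hα hV)

theorem eta_lt_alpha (S : IsSaddlePoint M O) (hα : 0 < M.α) (hV : 0 < O.V) :
    O.eta < M.α := by
  rw [← sub_pos, S.alpha_sub_eta (by positivity)]
  exact S.Vhat_pos hα hV

theorem eta_lt_one (S : IsSaddlePoint M O) (hlam : 0 < M.lam) (hV : 0 < O.V) :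
    O.eta < 1 := by
  have V_mul : O.V * (M.lam + O.Vhat) = 1 := by
    have lam_add_Vhat_pos : 0 < M.lam + O.Vhat := one_div_pos.1 (S.V_eq ▸ hV)
    exact (eq_div_iff lam_add_Vhat_pos.ne').1 S.V_eq
  have V_mul_lam_pos : 0 < O.V * M.lam := mul_pos hV hlam
  rw [Overlaps.eta]
  linarith

theorem alpha_sub_eta_sq_pos (S : IsSaddlePoint M O) (hα : 0 < M.α) (hlam : 0 < M.lam)
    (hV : 0 < O.V) : 0 < M.α - O.eta ^ 2 :=
  sub_pos.2 <| calc
    O.eta ^ 2 < O.eta := pow_lt_self_of_lt_one₀ (S.eta_pos hα hV) (S.eta_lt_one hlam hV) one_lt_two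
    _ < M.α := S.eta_lt_alpha hα hV

end OrderedField

end IsSaddlePoint

theorem exact_asymptotics_two_cluster_general {K : Type*} [Field K] [LinearOrder K]
    [IsStrictOrderedRing K] {M : TwoClusterModel K} {O : Overlaps K} (S : IsSaddlePoint M O)
    (hα : 0 < M.α) (hlam : 0 < M.lam) (hΔ : 0 < M.Δ) (hρ : 0 ≤ M.ρ) (hγ : 0 ≤ M.γ)
    (hV : 0 < O.V) :
    (0 < O.eta ∧ O.eta < min M.α 1) ∧ 0 < M.α - O.eta ^ 2 ∧ 0 < 1 + M.γ * O.eta ∧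
    genError M O = orthogonalGenError M O.eta * (1 - M.π ^ 2 * alignmentCoeff M O.eta) ∧
    trainError M O = orthogonalTrainError M O.eta * (1 - M.π ^ 2 * alignmentCoeff M O.eta) := by
  have eta_pos := S.eta_pos hα hV
  have eta_lt := lt_min (S.eta_lt_alpha hα hV) (S.eta_lt_one hlam hV)
  have hD := S.alpha_sub_eta_sq_pos hα hlam hV
  have hG : 0 < 1 + M.γ * O.eta := by positivity
  have hR : 0 < M.Δ + (O.eta - 1) ^ 2 * M.ρ := by positivity
  have one_add_V_pos : 0 < 1 + O.V := by positivity
  exact ⟨⟨eta_pos, eta_lt⟩, hD, hG, S.genError_eq hD.ne' hG.ne' hR.ne',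
    S.trainError_eq hα.ne' one_add_V_pos.ne' hD.ne' hG.ne' hR.ne'⟩

/-- Exact asymptotics for ridge regression on a symmetric two-cluster Gaussian
mixture with identity covariances: the solution of the coupled saddle-point
system satisfies, with `η := V·V̂`, `ε_gen := ρ + Δ + q − 2m + (π−h)²` and
`ε_tr := ε_gen/(1+V)²`, that `η ∈ (0, min α 1)` (so `α − η² > 0` and
`1 + γη > 0`), and `ε_gen = g(α,Δ,ρ,η)(1 − π²A(η))`,
`ε_tr = t(α,Δ,ρ,η)(1 − π²A(η))`. -/
theorem exact_asymptotics_two_cluster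
    (α lam Δ ρ γ π V q m h Vhat qhat mhat hhat : ℝ)
    (hα : 0 < α) (hlam : 0 < lam) (hΔ : 0 < Δ) (hρ : 0 ≤ ρ) (hγ : 0 ≤ γ)
    (hV : 0 < V)
    (e1 : Vhat = α / (1 + V))
    (e2 : qhat = α * (ρ + Δ + q - 2*m + (π - h)^2) / (1 + V)^2)
    (e3 : mhat = α / (1 + V))
    (e4 : hhat = α * (π - h) / (1 + V))
    (e5 : V = 1 / (lam + Vhat))
    (e6 : q = V^2 * (qhat + ρ * mhat^2 + 2*π*mhat*hhat + γ*hhat^2))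
    (e7 : m = V * (ρ * mhat + π * hhat))
    (e8 : h = V * (γ * hhat + π * mhat))
    (η εgen εtr : ℝ)
    (hη : η = V * Vhat)
    (hgen : εgen = ρ + Δ + q - 2*m + (π - h)^2)
    (htr : εtr = εgen / (1 + V)^2) :
    (0 < η ∧ η < min α 1) ∧ 0 < α - η^2 ∧ 0 < 1 + γ*η ∧
    εgen = (α * (Δ + (η-1)^2*ρ) / (α - η^2)) *
      (1 - π^2 * ((η-1)^2*(γ*η^2 + 2*η - 1) /
        ((Δ + (η-1)^2*ρ)*(1+γ*η)^2))) ∧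
    εtr = ((α-η)^2*(Δ + (η-1)^2*ρ) / (α*(α - η^2))) *
      (1 - π^2 * ((η-1)^2*(γ*η^2 + 2*η - 1) /
        ((Δ + (η-1)^2*ρ)*(1+γ*η)^2))) := by
  subst hη hgen htr
  exact exact_asymptotics_two_cluster_general
    (M := ⟨α, lam, Δ, ρ, γ, π⟩) (O := ⟨V, q, m, h, Vhat, qhat, mhat, hhat⟩)
    ⟨e1, e2, e3, e4, e5, e6, e7, e8⟩ hα hlam hΔ hρ hγ hV
end

section
/- Let C be a nonempty finite index set, α > 0, Δ ∈ ℝ, and for each c ∈ C let p_c > 0 with Σ_{c∈C} p_c = 1, and let V_c > −1 and R_c be real numbers. Define V̂_c := α p_c/(1 + V_c) and q̂_c := α p_c (Δ + R_c)/(1 + V_c)². Assume that Σ_{c∈C} V_c V̂_c = 1 and Σ_{c∈C} (R_c V̂_c − V_c q̂_c) = 0. Then (1/α)·Σ_{c∈C} q̂_c = Δ(α − 1)/α. -/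
/-!
With denominators cleared, the saddle-point relations read `(1 + V_c) V̂_c = α p_c` and
`(1 + V_c) q̂_c = (Δ + R_c) V̂_c`. Summing the first over the clusters, the constraint on
`∑ V_c V̂_c` gives `∑ V̂_c = α - 1`. Summing the second, the remaining constraint cancels everything
that depends on the individual clusters and leaves `∑ q̂_c = Δ ∑ V̂_c`.
-/

open Finset

theorem sum_eq_sum_sub_sum_of_one_add_mul_eq {ι A : Type*} [NonAssocRing A] {s : Finset ι}
    {v x y : ι → A} (h : ∀ i ∈ s, (1 + v i) * x i = y i) :
    ∑ i ∈ s, x i = ∑ i ∈ s, y i - ∑ i ∈ s, v i * x i := by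
  rw [eq_sub_iff_add_eq, ← sum_add_distrib]
  exact sum_congr rfl fun i hi => by rw [← h i hi, one_add_mul]

section SaddlePoint

variable {C A : Type*} [NonAssocRing A] {s : Finset C}

theorem sum_Vhat_eq_sub_one {α : A} {p V Vhat : C → A}
    (hpsum : ∑ c ∈ s, p c = 1) (hVhat : ∀ c ∈ s, (1 + V c) * Vhat c = α * p c)
    (hsum : ∑ c ∈ s, V c * Vhat c = 1) :
    ∑ c ∈ s, Vhat c = α - 1 := by
  rw [sum_eq_sum_sub_sum_of_one_add_mul_eq hVhat, ← mul_sum, hpsum, mul_one, hsum]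

theorem sum_qhat_eq_mul_sum_Vhat {Δ : A} {V R Vhat qhat : C → A}
    (hqhat : ∀ c ∈ s, (1 + V c) * qhat c = (Δ + R c) * Vhat c)
    (hsum : ∑ c ∈ s, (R c * Vhat c - V c * qhat c) = 0) :
    ∑ c ∈ s, qhat c = Δ * ∑ c ∈ s, Vhat c :=
  calc ∑ c ∈ s, qhat c
      = ∑ c ∈ s, (Δ + R c) * Vhat c - ∑ c ∈ s, V c * qhat c :=
        sum_eq_sum_sub_sum_of_one_add_mul_eq hqhat
    _ = Δ * ∑ c ∈ s, Vhat c + ∑ c ∈ s, (R c * Vhat c - V c * qhat c) := by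
        simp only [add_mul, sum_add_distrib, sum_sub_distrib, mul_sum, add_sub_assoc]
    _ = Δ * ∑ c ∈ s, Vhat c := by rw [hsum, add_zero]

theorem strong_universality_training_error_general {K : Type*} [Field K] {α Δ : K}
    {p V R Vhat qhat : C → K} (hpsum : ∑ c ∈ s, p c = 1) (hV : ∀ c ∈ s, 1 + V c ≠ 0)
    (hVhat : ∀ c ∈ s, Vhat c = α * p c / (1 + V c))
    (hqhat : ∀ c ∈ s, qhat c = α * p c * (Δ + R c) / (1 + V c) ^ 2)
    (hsum1 : ∑ c ∈ s, V c * Vhat c = 1)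
    (hsum2 : ∑ c ∈ s, (R c * Vhat c - V c * qhat c) = 0) :
    (1 / α) * ∑ c ∈ s, qhat c = Δ * (α - 1) / α := by
  have one_add_mul_Vhat : ∀ c ∈ s, (1 + V c) * Vhat c = α * p c := fun c hc => by
    rw [hVhat c hc, mul_div_cancel₀ _ (hV c hc)]
  have one_add_mul_qhat : ∀ c ∈ s, (1 + V c) * qhat c = (Δ + R c) * Vhat c := fun c hc => by
    have := hV c hc
    rw [hqhat c hc, hVhat c hc]
    field_simp
  rw [sum_qhat_eq_mul_sum_Vhat one_add_mul_qhat hsum2,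
    sum_Vhat_eq_sub_one hpsum one_add_mul_Vhat hsum1, one_div_mul_eq_div]

end SaddlePoint

/-- Algebraic core of the strong universality of the square loss at vanishing
regularization: with `V̂_c := α p_c/(1 + V_c)` and
`q̂_c := α p_c (Δ + R_c)/(1 + V_c)²`, the constraints `Σ_c V_c V̂_c = 1` and
`Σ_c (R_c V̂_c − V_c q̂_c) = 0` imply that the training error
`(1/α)·Σ_c q̂_c` equals `Δ(α − 1)/α`. -/
theorem strong_universality_training_error {C : Type*} [Fintype C] [Nonempty C]
    (α Δ : ℝ) (hα : 0 < α)
    (p V R Vhat qhat : C → ℝ)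
    (hp : ∀ c, 0 < p c) (hpsum : ∑ c, p c = 1)
    (hV : ∀ c, -1 < V c)
    (hVhat : ∀ c, Vhat c = α * p c / (1 + V c))
    (hqhat : ∀ c, qhat c = α * p c * (Δ + R c) / (1 + V c)^2)
    (hsum1 : ∑ c, V c * Vhat c = 1)
    (hsum2 : ∑ c, (R c * Vhat c - V c * qhat c) = 0) :
    (1/α) * ∑ c, qhat c = Δ * (α - 1) / α := by
  exact strong_universality_training_error_general hpsum
    (fun c _ => (neg_lt_iff_pos_add'.mp (hV c)).ne')
    (fun c _ => hVhat c) (fun c _ => hqhat c) hsum1 hsum2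
end
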